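/- Let s = 1, k ≥ 1, m = 2k+1, I = [−1,1], and let b_1,…,b_k be pairwise distinct reals with b_i ∉ [−1,1]. For each i let τ_i be the solution of 2b_i = τ_i + 1/τ_i with 0 < |τ_i| < 1, and define d_0,…,d_{4k} by ∏_{i=1}^k (t−τ_i)^4 = Σ_{i=0}^{4k} d_i t^i. Then the Chebyshev points s_1 < ⋯ < s_m of the system 1, 1/(t−b_1), 1/(t−b_1)², …, 1/(t−b_k), 1/(t−b_k)² on [−1,1] are exactly the zeros in [−1,1] of the function t ↦ (1−t²) Σ_{i=0}^{4k} d_i U_{i−2k−1}(t), where U_n denotes the n-th Chebyshev polynomial of the second kind, extended to negative indices by U_{−1} = 0 and U_{−n} = −U_{n−2}. -/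

import Mathlib

open Matrix Finset Polynomial

noncomputable def fRat (s k : ℕ) (b : Fin k → ℝ) (i : Fin (s + 2 * k)) (t : ℝ) : ℝ :=
  if hi : i.val < s then t ^ i.val
  else
    let q : Fin k := ⟨(i.val - s) / 2, by have := i.isLt; omega⟩
    if (i.val - s) % 2 = 0 then (t - b q)⁻¹ else ((t - b q) ^ 2)⁻¹

/-!
Write `D(t) = ∏ (1 + τᵢ² - 2τᵢt)` and `n` for the number of factors. On the unit circle,
`z⁻ⁿ ∏ (z - τᵢ)² = D(cos θ) exp(iΦ(θ))` with `z = exp(iθ)`, where the phase `Φ` increases by `nπ`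
over `[0, π]`. The real and imaginary parts of the left-hand side are `A(cos θ)` and
`sin θ · U(cos θ)` for two combinations `A`, `U` of shifted Chebyshev polynomials of the first and
second kind. Hence `A² + (1 - t²)U² = D²`, and `A/D` equioscillates at `n + 1` points.

By Lagrange interpolation, a polynomial of degree at most `n` that equioscillates between `±D` has
the largest leading coefficient among those bounded by `D`, and every other maximizer has absolute
value `D` at its oscillation points. So if `R/D` also equioscillates, at `s₀ < ⋯ < sₙ`, then
`|A(sⱼ)| = D(sⱼ)`, i.e. the `sⱼ` are zeros of `(1 - t²)U`, which has degree at most `n + 1`.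
-/

section ExtremalCoefficient

open Lagrange

/-- The polynomial `p` takes the values `±w`, with alternating signs, at the increasing points
`sⱼ` of `[-1, 1]`; the sign at the first point is left free. -/
structure Equioscillates {m : ℕ} (p w : ℝ[X]) (s : Fin m → ℝ) : Prop where
  strictMono : StrictMono s
  mem_Icc : ∀ j, s j ∈ Set.Icc (-1 : ℝ) 1
  exists_sign : ∃ ε : ℝ, |ε| = 1 ∧ ∀ j, p.eval (s j) = ε * (-1) ^ (j : ℕ) * w.eval (s j)

theorem coeff_eq_sum_eval_mul_nodalWeight {K : Type*} [Field K] {n : ℕ} {s : Fin (n + 1) → K}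
    (hs : Function.Injective s) {p : K[X]} (hp : p.natDegree ≤ n) :
    p.coeff n = ∑ j, p.eval (s j) * nodalWeight univ s j := by
  have hdeg : p.degree < #(univ : Finset (Fin (n + 1))) := by
    rw [card_univ, Fintype.card_fin]
    exact degree_le_natDegree.trans_lt (by exact_mod_cast Nat.lt_succ_of_le hp)
  simpa [nodalWeight, div_eq_mul_inv] using coeff_eq_sum (v := s) hs.injOn hdeg

theorem abs_nodalWeight_of_strictMono {K : Type*} [Field K] [LinearOrder K]
    [IsStrictOrderedRing K] {n : ℕ} {s : Fin (n + 1) → K} (hs : StrictMono s) (j : Fin (n + 1)) :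
    |nodalWeight univ s j| = (-1) ^ (n + j : ℕ) * nodalWeight univ s j := by
  have hsplit : (univ.erase j : Finset (Fin (n + 1))) = Iio j ∪ Ioi j := by
    ext i; simp [lt_or_lt_iff_ne]
  have hdisj : Disjoint (Iio j) (Ioi j) :=
    disjoint_left.2 fun i hi hi' => lt_asymm (mem_Iio.1 hi) (mem_Ioi.1 hi')
  have hbelow : ∀ i ∈ Iio j, |(s j - s i)⁻¹| = (s j - s i)⁻¹ := fun i hi =>
    abs_of_pos (inv_pos.2 (sub_pos.2 (hs (mem_Iio.1 hi))))
  have habove : ∀ i ∈ Ioi j, |(s j - s i)⁻¹| = -1 * (s j - s i)⁻¹ := fun i hi => by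
    rw [neg_one_mul, abs_of_neg (inv_lt_zero.2 (sub_neg.2 (hs (mem_Ioi.1 hi))))]
  have hsign : (-1 : K) ^ (n - j : ℕ) = (-1) ^ (n + j : ℕ) := by
    have hj : n + j = n - j + 2 * (j : ℕ) := by omega
    rw [hj, pow_add, pow_mul, neg_one_sq, one_pow, mul_one]
  rw [nodalWeight, abs_prod, hsplit, prod_union hdisj, prod_union hdisj, prod_congr rfl hbelow,
    prod_congr rfl habove, prod_mul_distrib, prod_const, Fin.card_Ioi, ← hsign,
    Nat.add_sub_cancel]
  ring

theorem abs_coeff_le_sum_abs_nodalWeight {n : ℕ} {s : Fin (n + 1) → ℝ}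
    (hs : Function.Injective s) {q w : ℝ[X]} (hq : q.natDegree ≤ n)
    (hqw : ∀ j, |q.eval (s j)| ≤ w.eval (s j)) :
    |q.coeff n| ≤ ∑ j, w.eval (s j) * |nodalWeight univ s j| := by
  rw [coeff_eq_sum_eval_mul_nodalWeight hs hq]
  refine (abs_sum_le_sum_abs _ _).trans (sum_le_sum fun j _ => ?_)
  rw [abs_mul]
  exact mul_le_mul_of_nonneg_right (hqw j) (abs_nonneg _)

theorem abs_eval_eq_of_sum_abs_nodalWeight_le {n : ℕ} {s : Fin (n + 1) → ℝ}
    (hs : Function.Injective s) {q w : ℝ[X]} (hq : q.natDegree ≤ n)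
    (hqw : ∀ j, |q.eval (s j)| ≤ w.eval (s j))
    (hmax : ∑ j, w.eval (s j) * |nodalWeight univ s j| ≤ |q.coeff n|) (j : Fin (n + 1)) :
    |q.eval (s j)| = w.eval (s j) := by
  have hle : ∀ i ∈ univ, |q.eval (s i)| * |nodalWeight univ s i| ≤
      w.eval (s i) * |nodalWeight univ s i| :=
    fun i _ => mul_le_mul_of_nonneg_right (hqw i) (abs_nonneg _)
  have hcoeff : |q.coeff n| ≤ ∑ i, |q.eval (s i)| * |nodalWeight univ s i| := by
    simp only [coeff_eq_sum_eval_mul_nodalWeight hs hq, ← abs_mul]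
    exact abs_sum_le_sum_abs _ _
  have heq := (sum_eq_sum_iff_of_le hle).1 (le_antisymm (sum_le_sum hle) (hmax.trans hcoeff))
  exact mul_right_cancel₀ (abs_ne_zero.2 (nodalWeight_ne_zero hs.injOn (mem_univ j)))
    (heq j (mem_univ j))

namespace Equioscillates

variable {n : ℕ} {p q w : ℝ[X]} {s s' : Fin (n + 1) → ℝ}

theorem abs_coeff (h : Equioscillates p w s) (hp : p.natDegree ≤ n)
    (hw : ∀ j, 0 ≤ w.eval (s j)) :
    |p.coeff n| = ∑ j, w.eval (s j) * |nodalWeight univ s j| := by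
  obtain ⟨ε, hε, hps⟩ := h.exists_sign
  have hcoeff : p.coeff n = ε * (-1) ^ n * ∑ j, w.eval (s j) * |nodalWeight univ s j| := by
    rw [coeff_eq_sum_eval_mul_nodalWeight h.strictMono.injective hp, mul_sum]
    refine sum_congr rfl fun j _ => ?_
    have hsq : ((-1 : ℝ) ^ n) ^ 2 = 1 := by rw [← pow_mul, mul_comm, pow_mul, neg_one_sq, one_pow]
    rw [hps, abs_nodalWeight_of_strictMono h.strictMono, pow_add]
    linear_combination
      -ε * (-1) ^ (j : ℕ) * w.eval (s j) * nodalWeight univ s j * hsq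
  have hnonneg : 0 ≤ ∑ j, w.eval (s j) * |nodalWeight univ s j| :=
    sum_nonneg fun j _ => mul_nonneg (hw j) (abs_nonneg _)
  rw [hcoeff, abs_mul, abs_mul, hε, abs_neg_one_pow, one_mul, one_mul, abs_of_nonneg hnonneg]

theorem abs_eval_eq (hp : Equioscillates p w s) (hq : Equioscillates q w s')
    (hpn : p.natDegree ≤ n) (hqn : q.natDegree ≤ n)
    (hpw : ∀ t ∈ Set.Icc (-1 : ℝ) 1, |p.eval t| ≤ w.eval t)
    (hqw : ∀ t ∈ Set.Icc (-1 : ℝ) 1, |q.eval t| ≤ w.eval t) (j : Fin (n + 1)) :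
    |q.eval (s j)| = w.eval (s j) := by
  have hw : ∀ t ∈ Set.Icc (-1 : ℝ) 1, 0 ≤ w.eval t := fun t ht => (abs_nonneg _).trans (hpw t ht)
  refine abs_eval_eq_of_sum_abs_nodalWeight_le hp.strictMono.injective hqn
    (fun i => hqw _ (hp.mem_Icc i)) ?_ j
  rw [← hp.abs_coeff hpn fun i => hw _ (hp.mem_Icc i),
    hq.abs_coeff hqn fun i => hw _ (hq.mem_Icc i)]
  exact abs_coeff_le_sum_abs_nodalWeight hq.strictMono.injective hpn
    fun i => hpw _ (hq.mem_Icc i)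

end Equioscillates

end ExtremalCoefficient

theorem setOf_isRoot_eq_range_of_natDegree_le {K : Type*} [CommRing K] [IsDomain K] {m : ℕ}
    {p : K[X]} (hp : p ≠ 0) (hdeg : p.natDegree ≤ m) {s : Fin m → K}
    (hs : Function.Injective s) (hroot : ∀ j, p.IsRoot (s j)) :
    {t | p.IsRoot t} = Set.range s := by
  have hroots : p.roots = (univ.map ⟨s, hs⟩).val :=
    roots_eq_of_natDegree_le_card_of_ne_zero (by simpa using hroot) (by simpa using hdeg) hp
  ext t
  rw [Set.mem_ofPred_eq, ← mem_roots hp, hroots]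
  simp

theorem exists_strictMonoOn_rightInvOn_of_continuousOn {α β : Type*}
    [ConditionallyCompleteLinearOrder α] [TopologicalSpace α] [OrderTopology α] [DenselyOrdered α]
    [LinearOrder β] [TopologicalSpace β] [OrderClosedTopology β] {f : α → β} {a b : α}
    (hab : a ≤ b) (hf : ContinuousOn f (Set.Icc a b)) :
    ∃ g : β → α, StrictMonoOn g (Set.Icc (f a) (f b)) ∧
      Set.MapsTo g (Set.Icc (f a) (f b)) (Set.Icc a b) ∧
      Set.RightInvOn g f (Set.Icc (f a) (f b)) := by
  -- `g y` is the first point of `[a, b]` at which `f` takes the value `y`.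
  set g : β → α := fun y => sInf (Set.Icc a b ∩ f ⁻¹' {y})
  have hg : ∀ y ∈ Set.Icc (f a) (f b), g y ∈ Set.Icc a b ∩ f ⁻¹' {y} := fun y hy =>
    (isCompact_Icc.of_isClosed_subset (hf.preimage_isClosed_of_isClosed isClosed_Icc
      isClosed_singleton) Set.inter_subset_left).sInf_mem (intermediate_value_Icc hab hf hy)
  refine ⟨g, fun y hy z hz hyz => ?_, fun y hy => (hg y hy).1, fun y hy => (hg y hy).2⟩
  obtain ⟨⟨hag, hgb⟩, hfg⟩ := hg z hz
  obtain ⟨x, ⟨hax, hxg⟩, hfx⟩ := intermediate_value_Icc hag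
    (hf.mono (Set.Icc_subset_Icc_right hgb)) (Set.mem_Icc.2 ⟨hy.1, hyz.le.trans_eq hfg.symm⟩)
  have hne : x ≠ g z := by
    rintro rfl
    exact hyz.ne (hfx.symm.trans hfg)
  have hle : g y ≤ x := csInf_le ⟨a, fun _ h => h.1.1⟩ ⟨⟨hax, hxg.trans hgb⟩, hfx⟩
  exact hle.trans_lt (lt_of_le_of_ne hxg hne)

section ShiftedChebyshev

/-- The combination `∑ pᵢ T_{i-n}`, whose value at `cos θ` is the real part of
`exp(-inθ) p(exp(iθ))` when `p` has degree at most `2n`. -/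
noncomputable def shiftedT (n : ℕ) (p : ℝ[X]) : ℝ[X] :=
  ∑ i ∈ range (2 * n + 1), C (p.coeff i) * Chebyshev.T ℝ ((i : ℤ) - n)

/-- The combination `∑ pᵢ U_{i-n-1}`, whose value at `cos θ` is, up to the factor `sin θ`, the
imaginary part of `exp(-inθ) p(exp(iθ))` when `p` has degree at most `2n`. -/
noncomputable def shiftedU (n : ℕ) (p : ℝ[X]) : ℝ[X] :=
  ∑ i ∈ range (2 * n + 1), C (p.coeff i) * Chebyshev.U ℝ ((i : ℤ) - n - 1)

theorem natDegree_shiftedT_le (n : ℕ) (p : ℝ[X]) : (shiftedT n p).natDegree ≤ n := by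
  refine natDegree_sum_le_of_forall_le _ _ fun i hi => (natDegree_C_mul_le _ _).trans ?_
  rw [Chebyshev.natDegree_T]
  have := mem_range.1 hi
  omega

theorem natDegree_shiftedU_le (n : ℕ) (p : ℝ[X]) : (shiftedU n p).natDegree ≤ n - 1 := by
  refine natDegree_sum_le_of_forall_le _ _ fun i hi => (natDegree_C_mul_le _ _).trans ?_
  rw [Chebyshev.natDegree_U]
  have := mem_range.1 hi
  omega

open Complex in
theorem shiftedT_add_shiftedU_mul_I {n : ℕ} {p : ℝ[X]} (hp : p.natDegree ≤ 2 * n) (θ : ℝ) :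
    ((shiftedT n p).eval (Real.cos θ) : ℝ) +
        ((shiftedU n p).eval (Real.cos θ) * Real.sin θ : ℝ) * I =
      exp (-(θ * I)) ^ n * aeval (exp (θ * I)) p := by
  have hT : (shiftedT n p).eval (Real.cos θ) =
      ∑ i ∈ range (2 * n + 1), p.coeff i * Real.cos (((i : ℝ) - n) * θ) := by
    simp [shiftedT, eval_finsetSum, Chebyshev.T_real_cos]
  have hU : (shiftedU n p).eval (Real.cos θ) * Real.sin θ =
      ∑ i ∈ range (2 * n + 1), p.coeff i * Real.sin (((i : ℝ) - n) * θ) := by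
    simp [shiftedU, eval_finsetSum, sum_mul, mul_assoc, Chebyshev.U_real_cos]
  have hexp : ∀ i : ℕ, exp (-(θ * I)) ^ n * exp (θ * I) ^ i =
      cos (((i : ℂ) - n) * θ) + sin (((i : ℂ) - n) * θ) * I := fun i => by
    rw [← exp_mul_I, ← exp_nat_mul, ← exp_nat_mul, ← exp_add]
    ring_nf
  rw [hT, hU, aeval_eq_sum_range' (Nat.lt_succ_of_le hp), mul_sum]
  push_cast
  rw [sum_mul, ← sum_add_distrib]
  refine sum_congr rfl fun i _ => ?_
  rw [real_smul]
  linear_combination -(p.coeff i : ℂ) * hexp i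

end ShiftedChebyshev

section Markov

variable {ι : Type*} [Fintype ι] (τ : ι → ℝ)

/-- The denominator `∏ (1 + τᵢ² - 2τᵢt)` of the Chebyshev–Markov rational functions; its zeros are
the poles `(τᵢ + τᵢ⁻¹) / 2`, and a `τᵢ = 0` stands for a pole at infinity. -/
noncomputable def markovDenom : ℝ[X] := ∏ i, (C (1 + τ i ^ 2) - C (2 * τ i) * X)

/-- The numerator of the Chebyshev–Markov rational function of the first kind, of which `T_n` is
the case `τ = 0`. -/
noncomputable def markovT : ℝ[X] := shiftedT (Fintype.card ι) (∏ i, (X - C (τ i)) ^ 2)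

/-- The numerator of the Chebyshev–Markov rational function of the second kind, of which
`U_{n-1}` is the case `τ = 0`. -/
noncomputable def markovU : ℝ[X] := shiftedU (Fintype.card ι) (∏ i, (X - C (τ i)) ^ 2)

/-- The phase of `∏ exp(-iθ) (exp(iθ) - τᵢ)²`. For `|τᵢ| < 1` each `1 - τᵢ exp(-iθ)` lies in the
right half-plane, so the phase is continuous in `θ`. -/
noncomputable def markovPhase (θ : ℝ) : ℝ :=
  ∑ i, (θ + 2 * Complex.arg (1 - τ i * Complex.exp (-(θ * Complex.I))))

theorem eval_markovDenom (t : ℝ) : (markovDenom τ).eval t = ∏ i, (1 + τ i ^ 2 - 2 * τ i * t) := by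
  simp [markovDenom, eval_prod]

theorem natDegree_markovDenom_le : (markovDenom τ).natDegree ≤ Fintype.card ι := by
  have hfactor : ∀ i ∈ univ, (C (1 + τ i ^ 2) - C (2 * τ i) * X).natDegree ≤ 1 :=
    fun i _ => by compute_degree
  simpa [markovDenom] using (natDegree_prod_le univ _).trans (sum_le_card_nsmul _ _ 1 hfactor)

open Complex in
theorem exp_neg_mul_exp_sub_sq (x θ : ℝ) :
    exp (-(θ * I)) * (exp (θ * I) - x) ^ 2 =
      (1 + x ^ 2 - 2 * x * Real.cos θ : ℝ) *
        exp ((θ + 2 * arg (1 - x * exp (-(θ * I))) : ℝ) * I) := by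
  set z := 1 - x * exp (-(θ * I)) with hz
  have hnorm : ‖z‖ ^ 2 = 1 + x ^ 2 - 2 * x * Real.cos θ := by
    have hre_im : z = (1 - x * Real.cos θ : ℝ) + (x * Real.sin θ : ℝ) * I := by
      rw [hz, ← neg_mul, exp_mul_I, cos_neg, sin_neg]
      push_cast
      ring
    rw [hre_im, Complex.sq_norm, normSq_add_mul_I]
    linear_combination x ^ 2 * Real.sin_sq_add_cos_sq θ
  have hinv : exp (-(θ * I)) * exp (θ * I) = 1 := by rw [← exp_add, neg_add_cancel, exp_zero]
  calc exp (-(θ * I)) * (exp (θ * I) - x) ^ 2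
      = exp (θ * I) * z ^ 2 := by
        rw [hz]
        linear_combination (exp (θ * I) - x ^ 2 * exp (-(θ * I))) * hinv
    _ = exp (θ * I) * (‖z‖ * exp (arg z * I)) ^ 2 := by rw [norm_mul_exp_arg_mul_I]
    _ = _ := by
        rw [← hnorm, mul_pow, ← exp_nat_mul, mul_left_comm, ← exp_add]
        push_cast
        ring_nf

open Complex in
theorem markovT_add_markovU_mul_I (θ : ℝ) :
    ((markovT τ).eval (Real.cos θ) : ℝ) + ((markovU τ).eval (Real.cos θ) * Real.sin θ : ℝ) * I =
      ((markovDenom τ).eval (Real.cos θ) : ℝ) * exp (markovPhase τ θ * I) := by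
  have hdeg : (∏ i, (X - C (τ i)) ^ 2).natDegree ≤ 2 * Fintype.card ι := by
    rw [natDegree_prod_of_monic _ _ fun i _ => (monic_X_sub_C _).pow _]
    simp [mul_comm]
  rw [markovT, markovU, shiftedT_add_shiftedU_mul_I hdeg, eval_markovDenom, markovPhase]
  push_cast
  rw [sum_mul, exp_sum, ← prod_mul_distrib, map_prod, ← card_univ, ← prod_const,
    ← prod_mul_distrib]
  refine prod_congr rfl fun i _ => ?_
  simpa using exp_neg_mul_exp_sub_sq (τ i) θ

theorem eval_markovT_cos (θ : ℝ) : (markovT τ).eval (Real.cos θ) =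
    (markovDenom τ).eval (Real.cos θ) * Real.cos (markovPhase τ θ) := by
  have h := congrArg Complex.re (markovT_add_markovU_mul_I τ θ)
  rwa [Complex.re_ofReal_mul, Complex.exp_ofReal_mul_I_re, Complex.add_re, Complex.ofReal_re,
    Complex.re_ofReal_mul, Complex.I_re, mul_zero, add_zero] at h

theorem eval_markovU_cos_mul_sin (θ : ℝ) : (markovU τ).eval (Real.cos θ) * Real.sin θ =
    (markovDenom τ).eval (Real.cos θ) * Real.sin (markovPhase τ θ) := by
  have h := congrArg Complex.im (markovT_add_markovU_mul_I τ θ)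
  rwa [Complex.im_ofReal_mul, Complex.exp_ofReal_mul_I_im, Complex.add_im, Complex.ofReal_im,
    Complex.im_ofReal_mul, Complex.I_im, mul_one, zero_add] at h

theorem markovT_sq_add_markovU_sq {t : ℝ} (ht : t ∈ Set.Icc (-1 : ℝ) 1) :
    (markovT τ).eval t ^ 2 + (1 - t ^ 2) * (markovU τ).eval t ^ 2 =
      (markovDenom τ).eval t ^ 2 := by
  obtain ⟨θ, -, rfl⟩ := Real.surjOn_cos ht
  have hU := eval_markovU_cos_mul_sin τ θ
  rw [eval_markovT_cos, ← Real.sin_sq, mul_comm (Real.sin θ ^ 2), ← mul_pow, hU]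
  linear_combination
    (markovDenom τ).eval (Real.cos θ) ^ 2 * Real.sin_sq_add_cos_sq (markovPhase τ θ)

variable {τ}

theorem markovDenom_pos (hτ : ∀ i, |τ i| < 1) {t : ℝ} (ht : t ∈ Set.Icc (-1 : ℝ) 1) :
    0 < (markovDenom τ).eval t := by
  rw [eval_markovDenom]
  refine prod_pos fun i _ => ?_
  have hle : τ i * t ≤ |τ i| :=
    (le_abs_self _).trans ((abs_mul _ _).trans_le
      (mul_le_of_le_one_right (abs_nonneg _) (abs_le.2 ht)))
  have hpos : 0 < (1 - |τ i|) ^ 2 := pow_pos (sub_pos.2 (hτ i)) 2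
  linarith [sq_abs (τ i)]

theorem abs_markovT_le (hτ : ∀ i, |τ i| < 1) {t : ℝ} (ht : t ∈ Set.Icc (-1 : ℝ) 1) :
    |(markovT τ).eval t| ≤ (markovDenom τ).eval t := by
  refine abs_le_of_sq_le_sq ?_ (markovDenom_pos hτ ht).le
  have hnonneg : 0 ≤ (1 - t ^ 2) * (markovU τ).eval t ^ 2 :=
    mul_nonneg (sub_nonneg.2 ((sq_le_one_iff_abs_le_one t).2 (abs_le.2 ht))) (sq_nonneg _)
  linarith [markovT_sq_add_markovU_sq τ ht]

theorem continuous_markovPhase (hτ : ∀ i, |τ i| < 1) : Continuous (markovPhase τ) := by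
  refine continuous_finsetSum _ fun i _ => continuous_id.add (continuous_const.mul ?_)
  refine continuous_iff_continuousAt.2 fun θ => ?_
  have hmem : 1 - τ i * Complex.exp (-(θ * Complex.I)) ∈ Complex.slitPlane := by
    rw [sub_eq_add_neg]
    refine Complex.mem_slitPlane_of_norm_lt_one ?_
    rw [norm_neg, norm_mul, ← neg_mul, ← Complex.ofReal_neg, Complex.norm_exp_ofReal_mul_I, mul_one,
      Complex.norm_real]
    exact hτ i
  exact ContinuousAt.comp (f := fun θ : ℝ => 1 - τ i * Complex.exp (-(θ * Complex.I)))
    (Complex.continuousAt_arg hmem) (by fun_prop)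

theorem markovPhase_zero (hτ : ∀ i, |τ i| < 1) : markovPhase τ 0 = 0 := by
  refine sum_eq_zero fun i _ => ?_
  have harg := Complex.arg_ofReal_of_nonneg (sub_nonneg.2 (abs_lt.1 (hτ i)).2.le)
  simpa using harg

theorem markovPhase_pi (hτ : ∀ i, |τ i| < 1) :
    markovPhase τ Real.pi = Fintype.card ι * Real.pi := by
  have harg : ∀ i, Complex.arg (1 - τ i * Complex.exp (-(Real.pi * Complex.I))) = 0 := fun i => by
    have h := Complex.arg_ofReal_of_nonneg (neg_le_iff_add_nonneg'.1 (abs_lt.1 (hτ i)).1.le)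
    simpa [Complex.exp_neg, Complex.exp_pi_mul_I] using h
  simp only [markovPhase, harg, mul_zero, add_zero, sum_const, card_univ, nsmul_eq_mul]

theorem exists_equioscillates_markovT (hτ : ∀ i, |τ i| < 1) :
    ∃ s : Fin (Fintype.card ι + 1) → ℝ, Equioscillates (markovT τ) (markovDenom τ) s := by
  set n := Fintype.card ι with hn
  obtain ⟨g, hg_mono, hg_mem, hg_inv⟩ := exists_strictMonoOn_rightInvOn_of_continuousOn
    Real.pi_pos.le (continuous_markovPhase hτ).continuousOn
  rw [markovPhase_zero hτ, markovPhase_pi hτ, ← hn] at hg_mono hg_mem hg_inv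
  -- Since `cos` is decreasing, the phases `nπ, (n - 1)π, …, 0` give increasing points.
  have hphase : ∀ j : Fin (n + 1), n * Real.pi - j * Real.pi ∈ Set.Icc 0 (n * Real.pi) :=
    fun j => by
      have hj : (j : ℝ) ≤ n := by exact_mod_cast Nat.le_of_lt_succ j.isLt
      exact ⟨sub_nonneg.2 (by gcongr), sub_le_self _ (by positivity)⟩
  refine ⟨fun j => Real.cos (g (n * Real.pi - j * Real.pi)), fun i j hij => ?_,
    fun j => Real.cos_mem_Icc _, (-1) ^ n, abs_neg_one_pow n, fun j => ?_⟩
  · refine Real.strictAntiOn_cos (hg_mem (hphase j)) (hg_mem (hphase i))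
      (hg_mono (hphase j) (hphase i) ?_)
    have hlt : (i : ℝ) < j := by exact_mod_cast hij
    gcongr
  · rw [eval_markovT_cos, hg_inv (hphase j), Real.cos_nat_mul_pi_sub, Real.cos_nat_mul_pi]
    ring

theorem markovU_ne_zero [Nonempty ι] (hτ : ∀ i, |τ i| < 1) : markovU τ ≠ 0 := by
  have hcard : (1 : ℝ) ≤ Fintype.card ι := by exact_mod_cast Fintype.card_pos
  have hmem : Real.pi / 2 ∈ Set.Icc (markovPhase τ 0) (markovPhase τ Real.pi) := by
    rw [markovPhase_zero hτ, markovPhase_pi hτ]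
    constructor <;> nlinarith [Real.pi_pos]
  obtain ⟨θ, -, hθ⟩ :=
    intermediate_value_Icc Real.pi_pos.le (continuous_markovPhase hτ).continuousOn hmem
  intro h
  have hU := eval_markovU_cos_mul_sin τ θ
  rw [h, eval_zero, zero_mul, hθ, Real.sin_pi_div_two, mul_one] at hU
  exact (markovDenom_pos hτ (Real.cos_mem_Icc θ)).ne hU

theorem zeros_markovU_eq_range_of_equioscillates [Nonempty ι] (hτ : ∀ i, |τ i| < 1) {R : ℝ[X]}
    (hR : R.natDegree ≤ Fintype.card ι)
    (hRτ : ∀ t ∈ Set.Icc (-1 : ℝ) 1, |R.eval t| ≤ (markovDenom τ).eval t)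
    {m : ℕ} (hm : m = Fintype.card ι + 1) {s : Fin m → ℝ}
    (hs : Equioscillates R (markovDenom τ) s) :
    {t : ℝ | t ∈ Set.Icc (-1 : ℝ) 1 ∧ (1 - t ^ 2) * (markovU τ).eval t = 0} = Set.range s := by
  subst hm
  obtain ⟨s', hs'⟩ := exists_equioscillates_markovT hτ
  have hextremal : ∀ j, |(markovT τ).eval (s j)| = (markovDenom τ).eval (s j) :=
    hs.abs_eval_eq hs' hR (natDegree_shiftedT_le _ _) hRτ fun t ht => abs_markovT_le hτ ht
  have hzero : ∀ j, (1 - s j ^ 2) * (markovU τ).eval (s j) = 0 := fun j => by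
    have hsq : (1 - s j ^ 2) * (markovU τ).eval (s j) ^ 2 = 0 := by
      rw [← add_eq_left, markovT_sq_add_markovU_sq τ (hs.mem_Icc j), ← hextremal, sq_abs]
    simpa using hsq
  have hne : (1 - X ^ 2 : ℝ[X]) ≠ 0 := fun h => by simpa using congrArg (eval 0) h
  have hdeg : ((1 - X ^ 2) * markovU τ).natDegree ≤ Fintype.card ι + 1 := by
    have h₁ : (1 - X ^ 2 : ℝ[X]).natDegree ≤ 2 := by compute_degree
    have h₂ : (markovU τ).natDegree ≤ Fintype.card ι - 1 := natDegree_shiftedU_le _ _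
    have hpos : 0 < Fintype.card ι := Fintype.card_pos
    exact natDegree_mul_le.trans (by omega)
  have hroots := setOf_isRoot_eq_range_of_natDegree_le
    (mul_ne_zero hne (markovU_ne_zero hτ)) hdeg hs.strictMono.injective (by simpa using hzero)
  rw [← hroots]
  ext t
  constructor
  · rintro ⟨-, ht⟩
    simpa using ht
  · intro ht
    obtain ⟨j, rfl⟩ := hroots ▸ ht
    exact ⟨hs.mem_Icc j, hzero j⟩

theorem zeros_markovU_eq_range_of_eval_eq_mul [Nonempty ι] (hτ : ∀ i, |τ i| < 1) {R : ℝ[X]}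
    (hR : R.natDegree ≤ Fintype.card ι) {f : ℝ → ℝ}
    (hRf : ∀ t ∈ Set.Icc (-1 : ℝ) 1, R.eval t = (markovDenom τ).eval t * f t)
    (hf : ∀ t ∈ Set.Icc (-1 : ℝ) 1, |f t| ≤ 1) {m : ℕ} (hm : m = Fintype.card ι + 1)
    {s : Fin m → ℝ} (hs : StrictMono s) (hsI : ∀ j, s j ∈ Set.Icc (-1 : ℝ) 1) {ε : ℝ}
    (hε : |ε| = 1) (hfs : ∀ j, f (s j) = ε * (-1) ^ (j : ℕ)) :
    {t : ℝ | t ∈ Set.Icc (-1 : ℝ) 1 ∧ (1 - t ^ 2) * (markovU τ).eval t = 0} = Set.range s := by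
  refine zeros_markovU_eq_range_of_equioscillates hτ hR (fun t ht => ?_) hm
    ⟨hs, hsI, ε, hε, fun j => by rw [hRf _ (hsI j), hfs, mul_comm]⟩
  have hD := (markovDenom_pos hτ ht).le
  rw [hRf t ht, abs_mul, abs_of_nonneg hD]
  exact mul_le_of_le_one_right hD (hf t ht)

end Markov

section RationalSystem

theorem exists_eval_eq_mul_inv_sub_pow {K : Type*} [Field K] {D : K[X]} {a : K} {e : ℕ}
    (hD : (X - C a) ^ e ∣ D) :
    ∃ r : K[X], r.natDegree ≤ D.natDegree ∧ ∀ t ≠ a, r.eval t = D.eval t * ((t - a) ^ e)⁻¹ := by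
  obtain ⟨r, rfl⟩ := hD
  refine ⟨r, ?_, fun t ht => ?_⟩
  · rcases eq_or_ne r 0 with rfl | hr
    · simp
    · rw [((monic_X_sub_C a).pow e).natDegree_mul' hr]
      exact Nat.le_add_left _ _
  · have : (t - a) ^ e ≠ 0 := pow_ne_zero e (sub_ne_zero.2 ht)
    simp only [eval_mul, eval_pow, eval_sub, eval_X, eval_C]
    field_simp

variable {s k : ℕ} {b : Fin k → ℝ} {D : ℝ[X]}

theorem exists_eval_eq_mul_fRat (hD : ∀ q, (X - C (b q)) ^ 2 ∣ D) (i : Fin (s + 2 * k)) :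
    ∃ r : ℝ[X], r.natDegree ≤ D.natDegree + (s - 1) ∧
      ∀ t ∉ Set.range b, r.eval t = D.eval t * fRat s k b i t := by
  by_cases hi : (i : ℕ) < s
  · refine ⟨D * X ^ (i : ℕ), ?_, fun t _ => by simp [fRat, hi]⟩
    exact natDegree_mul_le.trans (by rw [natDegree_X_pow]; omega)
  · set q : Fin k := ⟨(i - s) / 2, by omega⟩ with hq
    have hpole : ∃ e ≤ 2, ∀ t, fRat s k b i t = ((t - b q) ^ e)⁻¹ := by
      by_cases hpar : ((i : ℕ) - s) % 2 = 0
      · exact ⟨1, one_le_two, fun t => by simp [fRat, hi, hpar, hq]⟩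
      · exact ⟨2, le_rfl, fun t => by simp [fRat, hi, hpar, hq]⟩
    obtain ⟨e, he, hf⟩ := hpole
    obtain ⟨r, hr, hreval⟩ := exists_eval_eq_mul_inv_sub_pow ((pow_dvd_pow _ he).trans (hD q))
    refine ⟨r, hr.trans (Nat.le_add_right _ _), fun t ht => ?_⟩
    rw [hf, hreval t fun h => ht ⟨q, h.symm⟩]

theorem exists_eval_eq_mul_sum_fRat (hD : ∀ q, (X - C (b q)) ^ 2 ∣ D)
    (c : Fin (s + 2 * k) → ℝ) :
    ∃ R : ℝ[X], R.natDegree ≤ D.natDegree + (s - 1) ∧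
      ∀ t ∉ Set.range b, R.eval t = D.eval t * ∑ i, c i * fRat s k b i t := by
  choose r hdeg hreval using exists_eval_eq_mul_fRat (s := s) hD
  refine ⟨∑ i, C (c i) * r i, ?_, fun t ht => ?_⟩
  · exact natDegree_sum_le_of_forall_le _ _ fun i _ => (natDegree_C_mul_le _ _).trans (hdeg i)
  · simp only [eval_finsetSum, eval_mul, eval_C, hreval _ t ht, mul_sum, mul_left_comm]

end RationalSystem

theorem X_sub_C_sq_dvd_markovDenom {k : ℕ} {b τ : Fin k → ℝ} (hτ0 : ∀ i, τ i ≠ 0)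
    (hτ : ∀ i, 2 * b i = τ i + (τ i)⁻¹) (q : Fin k) :
    (X - C (b q)) ^ 2 ∣ markovDenom fun x : Fin k × Fin 2 => τ x.1 := by
  have hfactor : C (1 + τ q ^ 2) - C (2 * τ q) * X = C (-2 * τ q) * (X - C (b q)) := by
    have hb : 1 + τ q ^ 2 = 2 * τ q * b q := by
      linear_combination (-τ q) * hτ q - mul_inv_cancel₀ (hτ0 q)
    rw [hb]
    simp only [C_mul, C_neg]
    ring
  rw [markovDenom, Fintype.prod_prod_type]
  refine dvd_trans ?_ (dvd_prod_of_mem _ (mem_univ q))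
  simp only [prod_const, card_univ, Fintype.card_fin, hfactor]
  exact pow_dvd_pow_of_dvd (dvd_mul_left _ _) 2

/-- for `s = 1` the Chebyshev points of the rational system on
`[−1,1]` are exactly the zeros in `[−1,1]` of
`(1−t²) Σ_{i=0}^{4k} dᵢ U_{i−2k−1}(t)`, where `Σ dᵢ tⁱ = ∏ (t−τᵢ)⁴` and
`2bᵢ = τᵢ + 1/τᵢ` with `0 < |τᵢ| < 1`. `U` is the (ℤ-indexed) Chebyshev polynomial
of the second kind, satisfying `U₋₁ = 0` and `U₋ₙ = −U_{n−2}`. -/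
theorem stmt13 (k : ℕ) (hk : 1 ≤ k)
    (b : Fin k → ℝ) (hbI : ∀ i, b i ∉ Set.Icc (-1 : ℝ) 1) (hb : Function.Injective b)
    (τ : Fin k → ℝ) (hτ0 : ∀ i, τ i ≠ 0) (hτ1 : ∀ i, |τ i| < 1)
    (hτ : ∀ i, 2 * b i = τ i + (τ i)⁻¹)
    (P : Polynomial ℝ) (hP : P = ∏ i : Fin k, (Polynomial.X - Polynomial.C (τ i)) ^ 4)
    (G : ℝ → ℝ)
    (hG : G = fun t => (1 - t ^ 2) *
      ∑ i ∈ Finset.range (4 * k + 1),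
        P.coeff i * (Polynomial.Chebyshev.U ℝ ((i : ℤ) - 2 * (k : ℤ) - 1)).eval t)
    (sv : Fin (1 + 2 * k) → ℝ) (hsv : StrictMono sv)
    (hsvI : ∀ i, sv i ∈ Set.Icc (-1 : ℝ) 1)
    (c : Fin (1 + 2 * k) → ℝ)
    (hbound : ∀ t ∈ Set.Icc (-1 : ℝ) 1, |∑ i, c i * fRat 1 k b i t| ≤ 1)
    (hosc : ∀ j : Fin (1 + 2 * k),
      ∑ i, c i * fRat 1 k b i (sv j) = (-1 : ℝ) ^ (j.val + 1)) :
    {t : ℝ | t ∈ Set.Icc (-1 : ℝ) 1 ∧ G t = 0} = Set.range sv := by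
  set σ : Fin k × Fin 2 → ℝ := fun x => τ x.1 with hσ
  have : NeZero k := ⟨by omega⟩
  have hcard : Fintype.card (Fin k × Fin 2) = 2 * k := by simp [mul_comm]
  have hPσ : P = ∏ x, (X - C (σ x)) ^ 2 := by
    simp [hP, hσ, Fintype.prod_prod_type, ← pow_mul]
  have hGσ : ∀ t, G t = (1 - t ^ 2) * (markovU σ).eval t := fun t => by
    rw [hG, markovU, shiftedU, ← hPσ, hcard, eval_finsetSum, ← mul_assoc]
    simp
  obtain ⟨R, hRdeg, hR⟩ := exists_eval_eq_mul_sum_fRat (X_sub_C_sq_dvd_markovDenom hτ0 hτ) c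
  have hIcc : ∀ t ∈ Set.Icc (-1 : ℝ) 1, t ∉ Set.range b := by
    rintro _ ht ⟨q, rfl⟩
    exact hbI q ht
  have hf : ∀ j, ∑ i, c i * fRat 1 k b i (sv j) = -1 * (-1) ^ (j : ℕ) := fun j => by
    rw [hosc, pow_succ']
  simp only [hGσ]
  exact zeros_markovU_eq_range_of_eval_eq_mul (f := fun t => ∑ i, c i * fRat 1 k b i t)
    (fun x => hτ1 x.1) (hRdeg.trans (natDegree_markovDenom_le σ)) (fun t ht => hR t (hIcc t ht))
    hbound (by rw [hcard, add_comm]) hsv hsvI (by rw [abs_neg, abs_one]) hf
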